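/- Suppose (b̃_n) is a sequence of positive reals with lim_n (b_n − b̃_n)/a_n = 0, and (ã_n) is a sequence of positive reals for which there exists M₀ > 0 with |ã_n − 1/(C τ b̃_n^{τ−1})| ≤ M₀ / b̃_n^{2τ−1} for all large n. Then for every x ∈ ℝ there exist a constant M > 0 and an index N such that for all n ≥ N, |F(ã_n x + b̃_n)^n − Λ(x)| ≤ M (|b_n^τ − b̃_n^τ| + |(b̃_n/b_n)^α − 1| + 1/b_n^τ). -/

import Mathlib

open Filter Set

open Asymptotics Topology

theorem aux_log2 : (fun z : ℝ => Real.log (1 + z) - z) =O[𝓝 0] (fun z => z ^ 2) := by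
  refine IsBigO.of_bound 2 ?_
  have h : ∀ᶠ z : ℝ in 𝓝 0, |z| < 1/2 := by
    have : Tendsto (fun z : ℝ => |z|) (𝓝 0) (𝓝 |0|) := (continuous_abs.tendsto 0)
    rw [abs_zero] at this
    exact this.eventually (gt_mem_nhds (by norm_num))
  filter_upwards [h] with z hz
  have h1 := Real.abs_log_sub_add_sum_range_le (x := -z) (by rw [abs_neg]; linarith) 1
  simp at h1
  rw [Real.norm_eq_abs, Real.norm_eq_abs, abs_of_nonneg (sq_nonneg z)]
  have e : |Real.log (1 + z) - z| = |-z + Real.log (1 + z)| := by congr 1; ring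
  rw [e]
  refine h1.trans ?_
  rw [div_le_iff₀ (by linarith)]
  nlinarith [sq_nonneg z]

theorem aux_exp2 : (fun z : ℝ => Real.exp z - 1 - z) =O[𝓝 0] (fun z => z ^ 2) := by
  have := Real.exp_sub_sum_range_isBigO_pow 2
  refine this.congr_left fun z => ?_
  simp [Finset.sum_range_succ]
  ring

theorem aux_exp1 : (fun z : ℝ => Real.exp z - 1) =O[𝓝 0] (fun z => z) := by
  have := (Real.hasDerivAt_exp 0).isBigO_sub
  simpa using this

theorem aux_rpow1 (p : ℝ) : (fun z : ℝ => (1 + z) ^ p - 1) =O[𝓝 0] (fun z => z) := by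
  have h := (((hasDerivAt_id (0:ℝ)).const_add 1).rpow_const (p := p) (Or.inl (by simp))).isBigO_sub
  simpa using h

theorem aux_rpow2 (p : ℝ) : (fun z : ℝ => (1 + z) ^ p - 1 - p * z) =O[𝓝 0] (fun z => z ^ 2) := by
  have hl : Tendsto (fun z : ℝ => p * Real.log (1 + z)) (𝓝 0) (𝓝 0) := by
    have : ContinuousAt (fun z : ℝ => p * Real.log (1 + z)) 0 := by
      refine continuousAt_const.mul (ContinuousAt.log (by fun_prop) (by simp))
    simpa [ContinuousAt] using this
  have hl1 : (fun z : ℝ => p * Real.log (1 + z)) =O[𝓝 0] (fun z => z) := by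
    have h := ((((hasDerivAt_id (0:ℝ)).const_add 1).log (by simp)).const_mul p).isBigO_sub
    simpa using h
  have h1 := (aux_exp2.comp_tendsto hl).trans (hl1.pow 2)
  have h2 := aux_log2.const_mul_left p
  refine (h1.add h2).congr' ?_ (Eventually.of_forall fun _ => rfl)
  have : ∀ᶠ z : ℝ in 𝓝 0, -1 < z := lt_mem_nhds (by norm_num)
  filter_upwards [this] with z hz
  simp only [Function.comp]
  rw [Real.rpow_def_of_pos (by linarith : (0:ℝ) < 1 + z), mul_comm (Real.log _)]
  ring

theorem aux_mul {f g R : ℕ → ℝ} (hR : Tendsto R atTop (𝓝 0))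
    (hf : (fun n => f n - 1) =O[atTop] R) (hg : (fun n => g n - 1) =O[atTop] R) :
    (fun n => f n * g n - 1) =O[atTop] R := by
  have h1 : Tendsto (fun n => f n - 1) atTop (𝓝 0) := hf.trans_tendsto hR
  have h2 : (fun n => (f n - 1) * (g n - 1)) =O[atTop] R := by
    simpa using (h1.isBigO_one ℝ).mul hg
  refine ((h2.add hf).add hg).congr_left fun n => by ring

/-- the power step -/
theorem aux_pow {t : ℕ → ℝ} {c : ℝ} (ht : Tendsto t atTop (𝓝 c)) :
    (fun n : ℕ => (1 - t n / n) ^ n - Real.exp (-t n)) =O[atTop] (fun n : ℕ => 1 / (n : ℝ)) := by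
  have hn : Tendsto (fun n : ℕ => 1 / (n : ℝ)) atTop (𝓝 0) := tendsto_one_div_atTop_nhds_zero_nat
  have ht1 : t =O[atTop] (fun _ => (1:ℝ)) := ht.isBigO_one ℝ
  have hz : (fun n : ℕ => - (t n / n)) =O[atTop] (fun n : ℕ => 1 / (n : ℝ)) := by
    refine (((ht1.mul (isBigO_refl (fun n : ℕ => 1 / (n : ℝ)) atTop)).neg_left)).congr ?_ ?_
    · intro n; ring
    · intro n; ring
  have hz0 := hz.trans_tendsto hn
  have h1 := (aux_log2.comp_tendsto hz0).trans (hz.pow 2)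
  have h2 : (fun n : ℕ => (n : ℝ) * Real.log (1 - t n / n) + t n) =O[atTop]
      (fun n : ℕ => 1 / (n : ℝ)) := by
    refine ((isBigO_refl (fun n : ℕ => (n : ℝ)) atTop).mul h1).congr' ?_ ?_
    · filter_upwards [eventually_ge_atTop 1] with n hn
      have : (n : ℝ) ≠ 0 := by positivity
      simp only [Function.comp]
      rw [← sub_eq_add_neg]
      field_simp
      ring
    · filter_upwards [eventually_ge_atTop 1] with n hn
      have : (n : ℝ) ≠ 0 := by positivity
      field_simp
  have h3 := (aux_exp1.comp_tendsto (h2.trans_tendsto hn)).trans h2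
  have h4 : (fun n => Real.exp (- t n)) =O[atTop] (fun _ => (1:ℝ)) :=
    ((Real.continuous_exp.tendsto _).comp ht.neg).isBigO_one ℝ
  refine (h4.mul h3).congr' ?_ ?_
  · have : ∀ᶠ n : ℕ in atTop, -1 < -(t n / n) := hz0.eventually (lt_mem_nhds (by norm_num))
    filter_upwards [this] with n hn
    simp only [Function.comp]
    rw [mul_sub, ← Real.exp_add, mul_one]
    congr 1
    rw [show -t n + (↑n * Real.log (1 - t n / ↑n) + t n) = n * Real.log (1 - t n / ↑n) by ring,
      Real.exp_nat_mul, Real.exp_log (by linarith)]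
  · exact Eventually.of_forall fun n => by ring

/-- Theorem 1.2: if `b̃_n > 0` satisfies `(b_n - b̃_n)/a_n → 0` and `ã_n > 0` satisfies
`ã_n = 1/(C τ b̃_n^{τ-1}) + O(1/b̃_n^{2τ-1})`, then
`F(ã_n x + b̃_n)^n = Λ(x)(1 + O(b_n^τ - b̃_n^τ) + O((b̃_n/b_n)^α - 1) + O(1/b_n^τ))`. -/
theorem stmt_2 (K C α τ x₁ : ℝ) (hK : 0 < K) (hC : 0 < C) (hα : 0 < α) (hτ : 1 ≤ τ)
    (hx₁ : 0 < x₁)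
    (hanti : StrictAntiOn (fun x : ℝ => K * x ^ α * Real.exp (-C * x ^ τ)) (Set.Ici x₁))
    (hlim : Tendsto (fun x : ℝ => K * x ^ α * Real.exp (-C * x ^ τ)) atTop (nhds 0))
    (hrange : ∀ x ≥ x₁, K * x ^ α * Real.exp (-C * x ^ τ) ∈ Set.Ioc (0 : ℝ) 1)
    (F : ℝ → ℝ) (hF : ∀ x ≥ x₁, F x = 1 - K * x ^ α * Real.exp (-C * x ^ τ))
    (b : ℕ → ℝ)
    (hb : ∀ᶠ n : ℕ in atTop,
      x₁ ≤ b n ∧ K * b n ^ α * Real.exp (-C * b n ^ τ) = 1 / (n : ℝ))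
    (a : ℕ → ℝ) (ha : ∀ n, a n = 1 / (C * τ * b n ^ (τ - 1) - α / b n))
    (bt : ℕ → ℝ) (hbt : ∀ n, 0 < bt n)
    (hbtlim : Tendsto (fun n => (b n - bt n) / a n) atTop (nhds 0))
    (at' : ℕ → ℝ) (hat : ∀ n, 0 < at' n)
    (hat' : ∃ M₀ > (0 : ℝ), ∀ᶠ n : ℕ in atTop,
      |at' n - 1 / (C * τ * bt n ^ (τ - 1))| ≤ M₀ / bt n ^ (2 * τ - 1)) :
    ∀ x : ℝ, ∃ M > (0 : ℝ), ∃ N : ℕ, ∀ n ≥ N,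
      |F (at' n * x + bt n) ^ n - Real.exp (-Real.exp (-x))|
        ≤ M * (|b n ^ τ - bt n ^ τ| + |(bt n / b n) ^ α - 1| + 1 / b n ^ τ) := by
  intro x
  have hτ0 : 0 < τ := by linarith
  have hnn : Tendsto (fun n : ℕ => 1 / (n : ℝ)) atTop (𝓝 0) := tendsto_one_div_atTop_nhds_zero_nat
  -- b tends to infinity
  have hbinf : Tendsto b atTop atTop := by
    rw [tendsto_atTop]
    intro A
    have hA : x₁ ≤ max A x₁ := le_max_right _ _
    have hg := (hrange _ hA).1
    filter_upwards [hb, hnn.eventually (gt_mem_nhds hg)] with n hn hlt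
    by_contra hcon
    push Not at hcon
    have := hanti.antitoneOn hn.1 hA (hcon.le.trans (le_max_left _ _))
    rw [hn.2] at this
    linarith
  have hbpos : ∀ᶠ n in atTop, 0 < b n := hbinf.eventually_gt_atTop 0
  have hbτ : Tendsto (fun n => b n ^ τ) atTop atTop := (tendsto_rpow_atTop hτ0).comp hbinf
  have hibτ : Tendsto (fun n => 1 / b n ^ τ) atTop (𝓝 0) := by
    simp only [one_div]; exact hbτ.inv_tendsto_atTop
  -- ratio
  have hw : Tendsto (fun n => C * τ * b n ^ τ - α) atTop atTop :=
    tendsto_atTop_add_const_right _ _ (hbτ.const_mul_atTop (by positivity))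
  have h1 : Tendsto (fun n => (1 - bt n / b n) * (C * τ * b n ^ τ - α)) atTop (𝓝 0) := by
    refine hbtlim.congr' ?_
    filter_upwards [hbpos] with n hn
    rw [ha, Real.rpow_sub hn, Real.rpow_one]
    field_simp
  have h2 : Tendsto (fun n => 1 - bt n / b n) atTop (𝓝 0) := by
    have := h1.mul hw.inv_tendsto_atTop
    rw [mul_zero] at this
    refine this.congr' ?_
    filter_upwards [hw.eventually_gt_atTop 0] with n hn
    simp only [Pi.inv_apply]
    field_simp
  have hr : Tendsto (fun n => bt n / b n) atTop (𝓝 1) := by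
    simpa using (tendsto_const_nhds (x := (1:ℝ))).sub h2
  have h3 : Tendsto (fun n => (bt n / b n - 1) * b n ^ τ) atTop (𝓝 0) := by
    have := (h1.add (h2.const_mul α)).const_mul (-(1 / (C * τ)))
    simp only [mul_zero, add_zero] at this
    refine this.congr fun n => ?_
    field_simp
    ring
  have hrp : ∀ p : ℝ, Tendsto (fun n => (bt n / b n) ^ p) atTop (𝓝 1) := by
    intro p
    simpa using hr.rpow_const (p := p) (Or.inl one_ne_zero)
  have h2' : Tendsto (fun n => bt n / b n - 1) atTop (𝓝 0) := by simpa using hr.sub_const 1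
  have hdec : ∀ᶠ n in atTop, (bt n / b n) ^ τ * b n ^ τ = bt n ^ τ := by
    filter_upwards [hbpos] with n hn
    rw [Real.div_rpow (hbt n).le hn.le]
    have : b n ^ τ ≠ 0 := by positivity
    field_simp
  have hD : Tendsto (fun n => b n ^ τ - bt n ^ τ) atTop (𝓝 0) := by
    have h4 := ((aux_rpow1 τ).comp_tendsto h2').mul (isBigO_refl (fun n => b n ^ τ) atTop)
    have h5 := (h4.trans_tendsto h3).neg
    rw [neg_zero] at h5
    refine h5.congr' ?_
    filter_upwards [hdec] with n hn
    simp only [Function.comp]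
    rw [show 1 + (bt n / b n - 1) = bt n / b n by ring, sub_mul, hn]
    ring
  set R : ℕ → ℝ := fun n => |b n ^ τ - bt n ^ τ| + |(bt n / b n) ^ α - 1| + 1 / b n ^ τ with hRdef
  have hR : Tendsto R atTop (𝓝 0) := by
    have := (hD.abs.add ((hrp α).sub_const 1).abs).add hibτ
    simpa [hRdef] using this
  have hRnn : ∀ᶠ n in atTop, 0 < b n ∧ |b n ^ τ - bt n ^ τ| ≤ R n ∧ |(bt n / b n) ^ α - 1| ≤ R n ∧
      |1 / b n ^ τ| ≤ R n ∧ 0 ≤ R n := by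
    filter_upwards [hbpos] with n hn
    have e1 := abs_nonneg (b n ^ τ - bt n ^ τ)
    have e2 := abs_nonneg ((bt n / b n) ^ α - 1)
    have e3 : 0 ≤ 1 / b n ^ τ := by positivity
    refine ⟨hn, ?_, ?_, ?_, ?_⟩
    · simp only [hRdef]; linarith
    · simp only [hRdef]; linarith
    · simp only [hRdef]; rw [abs_of_nonneg e3]; linarith
    · simp only [hRdef]; linarith
  have hO1 : (fun n => b n ^ τ - bt n ^ τ) =O[atTop] R := by
    refine IsBigO.of_bound 1 ?_
    filter_upwards [hRnn] with n hn
    rw [Real.norm_eq_abs, Real.norm_eq_abs, one_mul, abs_of_nonneg hn.2.2.2.2]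
    exact hn.2.1
  have hO2 : (fun n => (bt n / b n) ^ α - 1) =O[atTop] R := by
    refine IsBigO.of_bound 1 ?_
    filter_upwards [hRnn] with n hn
    rw [Real.norm_eq_abs, Real.norm_eq_abs, one_mul, abs_of_nonneg hn.2.2.2.2]
    exact hn.2.2.1
  have hO3 : (fun n => 1 / b n ^ τ) =O[atTop] R := by
    refine IsBigO.of_bound 1 ?_
    filter_upwards [hRnn] with n hn
    rw [Real.norm_eq_abs, Real.norm_eq_abs, one_mul, abs_of_nonneg hn.2.2.2.2]
    exact hn.2.2.2.1
  -- 1 / bt ^ τ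
  have hO4 : (fun n => 1 / bt n ^ τ) =O[atTop] (fun n => 1 / b n ^ τ) := by
    have := ((hrp (-τ)).isBigO_one ℝ).mul (isBigO_refl (fun n => 1 / b n ^ τ) atTop)
    refine this.congr' ?_ (Eventually.of_forall fun n => by ring)
    filter_upwards [hbpos] with n hn
    rw [Real.rpow_neg (by have := hbt n; positivity), Real.div_rpow (hbt n).le hn.le]
    have : b n ^ τ ≠ 0 := by positivity
    field_simp
  have hO4R := hO4.trans hO3
  have hibtτ : Tendsto (fun n => 1 / bt n ^ τ) atTop (𝓝 0) := hO4R.trans_tendsto hR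
  -- u
  obtain ⟨M₀, hM₀, hat'⟩ := hat'
  set u : ℕ → ℝ := fun n => at' n * x / bt n with hu
  have hu1 : (fun n => u n - x / (C * τ) * (1 / bt n ^ τ)) =O[atTop]
      (fun n => (1 / bt n ^ τ) ^ 2) := by
    refine IsBigO.of_bound (|x| * M₀) ?_
    filter_upwards [hat'] with n hn
    have hB := hbt n
    have hBt : 0 < bt n ^ τ := by positivity
    have e1 : bt n ^ (τ - 1) = bt n ^ τ / bt n := by rw [Real.rpow_sub hB, Real.rpow_one]
    have e2 : bt n ^ (2 * τ - 1) = (bt n ^ τ) ^ 2 / bt n := by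
      rw [Real.rpow_sub hB, Real.rpow_one, mul_comm, Real.rpow_mul hB.le]
      norm_num
    rw [e1, e2] at hn
    have e3 : u n - x / (C * τ) * (1 / bt n ^ τ)
        = (at' n - 1 / (C * τ * (bt n ^ τ / bt n))) * (x / bt n) := by
      simp only [hu]; field_simp
    rw [Real.norm_eq_abs, Real.norm_eq_abs, e3, abs_mul, abs_div x, abs_of_pos hB,
      abs_of_nonneg (sq_nonneg (1 / bt n ^ τ))]
    calc _ ≤ M₀ / ((bt n ^ τ) ^ 2 / bt n) * (|x| / bt n) := by gcongr
      _ = _ := by field_simp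
  have hsq : (fun n => (1 / bt n ^ τ) ^ 2) =O[atTop] (fun n => 1 / bt n ^ τ) := by
    refine ((hibtτ.isBigO_one ℝ).mul (isBigO_refl (fun n => 1 / bt n ^ τ) atTop)).congr ?_ ?_
    · intro n; ring
    · intro n; ring
  have hu2 : u =O[atTop] (fun n => 1 / bt n ^ τ) := by
    refine ((hu1.trans hsq).add
      ((isBigO_refl (fun n => 1 / bt n ^ τ) atTop).const_mul_left (x / (C * τ)))).congr_left ?_
    intro n; ring
  have hu0 : Tendsto u atTop (𝓝 0) := hu2.trans_tendsto hibtτ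
  have hu3 : (fun n => (1 + u n) ^ τ - 1 - τ * u n) =O[atTop] (fun n => (1 / bt n ^ τ) ^ 2) :=
    ((aux_rpow2 τ).comp_tendsto hu0).trans (hu2.pow 2)
  have hu4 : (fun n => bt n ^ τ * (1 + u n) ^ τ - bt n ^ τ - x / C) =O[atTop]
      (fun n => 1 / bt n ^ τ) := by
    refine ((isBigO_refl (fun n => bt n ^ τ) atTop).mul
      (hu3.add (hu1.const_mul_left τ))).congr ?_ ?_
    · intro n
      have hBt : 0 < bt n ^ τ := by have := hbt n; positivity
      field_simp
      ring
    · intro n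
      have hBt : 0 < bt n ^ τ := by have := hbt n; positivity
      field_simp
  set q : ℕ → ℝ := fun n => -C * (bt n ^ τ * (1 + u n) ^ τ - b n ^ τ) + x with hq
  have hqO : q =O[atTop] R := by
    refine (((hu4.trans hO4R).const_mul_left (-C)).add (hO1.const_mul_left C)).congr_left ?_
    intro n
    simp only [hq]
    field_simp
    ring
  have hE : (fun n => Real.exp (q n) - 1) =O[atTop] R :=
    (aux_exp1.comp_tendsto (hqO.trans_tendsto hR)).trans hqO
  have hU : (fun n => (1 + u n) ^ α - 1) =O[atTop] R :=
    ((aux_rpow1 α).comp_tendsto hu0).trans (hu2.trans hO4R)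
  have hP := aux_mul hR (aux_mul hR hO2 hU) hE
  set t : ℕ → ℝ := fun n => Real.exp (-x) * ((bt n / b n) ^ α * (1 + u n) ^ α * Real.exp (q n))
    with ht
  have htO : (fun n => t n - Real.exp (-x)) =O[atTop] R := by
    refine (hP.const_mul_left (Real.exp (-x))).congr_left fun n => ?_
    simp only [ht]; ring
  have htl : Tendsto t atTop (𝓝 (Real.exp (-x))) := by
    simpa using (htO.trans_tendsto hR).add_const (Real.exp (-x))
  have hmain1 := aux_pow htl
  have hnb : (fun n : ℕ => 1 / (n : ℝ)) =O[atTop] (fun n => 1 / b n ^ τ) := by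
    have h5 := (tendsto_rpow_mul_exp_neg_mul_atTop_nhds_zero (α / τ + 1) C hC).comp hbτ
    have h6 := ((h5.const_mul K).isBigO_one ℝ).mul (isBigO_refl (fun n => 1 / b n ^ τ) atTop)
    refine h6.congr' ?_ (Eventually.of_forall fun n => by ring)
    filter_upwards [hb, hbpos] with n hn hp
    have hBt : 0 < b n ^ τ := by positivity
    rw [← hn.2]
    simp only [Function.comp]
    rw [Real.rpow_add hBt, Real.rpow_one, ← Real.rpow_mul hp.le, mul_div_cancel₀ _ hτ0.ne']
    field_simp
  have hmain2 : (fun n => Real.exp (- t n) - Real.exp (-Real.exp (-x))) =O[atTop] R := by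
    have h7 := ((hasDerivAt_neg (Real.exp (-x))).exp).isBigO_sub
    exact (h7.comp_tendsto htl).trans htO
  have hmain := (hmain1.trans (hnb.trans hO3)).add hmain2
  obtain ⟨M, hM, hMb⟩ := hmain.exists_pos
  refine ⟨M, hM, ?_⟩
  rw [← eventually_atTop]
  have hbtinf : Tendsto bt atTop atTop := by
    refine (hr.pos_mul_atTop one_pos hbinf).congr' ?_
    filter_upwards [hbpos] with n hn
    field_simp
  have hyinf : Tendsto (fun n => bt n * (1 + u n)) atTop atTop := by
    have : Tendsto (fun n => 1 + u n) atTop (𝓝 1) := by simpa using hu0.const_add 1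
    exact hbtinf.atTop_mul_pos one_pos this
  filter_upwards [hMb.bound, hRnn, hb, hyinf.eventually_ge_atTop x₁, eventually_ge_atTop 1]
    with n h1 h2 h3 h4 h5
  rw [Real.norm_eq_abs, Real.norm_eq_abs, abs_of_nonneg h2.2.2.2.2] at h1
  refine le_of_eq_of_le ?_ h1
  have hB := hbt n
  have hn0 : (0:ℝ) < n := by positivity
  have hy : at' n * x + bt n = bt n * (1 + u n) := by
    simp only [hu]; field_simp; ring
  have hpu : 0 < 1 + u n := by
    by_contra hcon
    push Not at hcon
    nlinarith
  have key : F (at' n * x + bt n) = 1 - t n / n := by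
    rw [hy, hF _ h4]
    congr 1
    have hbn := h2.1
    rw [div_eq_mul_one_div (t n), ← h3.2]
    simp only [ht, hq]
    rw [Real.mul_rpow hB.le hpu.le, Real.mul_rpow hB.le hpu.le, Real.div_rpow hB.le hbn.le]
    have : 0 < b n ^ α := by positivity
    have e : Real.exp (-C * (bt n ^ τ * (1 + u n) ^ τ)) = Real.exp (-x) *
        Real.exp (-C * (bt n ^ τ * (1 + u n) ^ τ - b n ^ τ) + x) * Real.exp (-C * b n ^ τ) := by
      rw [← Real.exp_add, ← Real.exp_add]; congr 1; ring
    rw [e]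
    field_simp
  rw [key]
  congr 1
  ring
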